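/- Fix integers n ≥ 1 and k with 1 ≤ k ≤ n, let x̃ ∈ ℝⁿ be k-sparse nonnegative, σ > 0 and C_w > 0. Then the map (g, h) ↦ ξ(σ, g, h, x̃) is Lipschitz on ℝᵐ × ℝⁿ with constant √(2·C_w² + σ²); that is, for all g⁽¹⁾, g⁽²⁾ ∈ ℝᵐ and h⁽¹⁾, h⁽²⁾ ∈ ℝⁿ: |ξ(σ, g⁽²⁾, h⁽²⁾, x̃) − ξ(σ, g⁽¹⁾, h⁽¹⁾, x̃)| ≤ √(2·C_w² + σ²)·√(‖g⁽²⁾ − g⁽¹⁾‖₂² + ‖h⁽²⁾ − h⁽¹⁾‖₂²). -/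

import Mathlib

noncomputable def e2norm {d : ℕ} (x : Fin d → ℝ) : ℝ := Real.sqrt (∑ i, x i ^ 2)

noncomputable def l1norm {d : ℕ} (x : Fin d → ℝ) : ℝ := ∑ i, |x i|

def kSparseNonneg (n k : ℕ) (x : Fin n → ℝ) : Prop :=
  (∀ i : Fin n, (i : ℕ) < n - k → x i = 0) ∧ ∀ i, 0 ≤ x i

/-- ξ(σ, g, h, x̃), the optimal value of the constrained minimization (2.11). -/
noncomputable def xiFun (m n : ℕ) (σ Cw : ℝ) (xt : Fin n → ℝ)
    (g : Fin m → ℝ) (h : Fin n → ℝ) : ℝ :=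
  sInf ((fun w : Fin n → ℝ =>
      Real.sqrt (e2norm w ^ 2 + σ ^ 2) * e2norm g + ∑ i, h i * w i) ''
    {w : Fin n → ℝ | e2norm w ≤ Cw ∧ l1norm (xt + w) ≤ l1norm xt})

lemma aux_e2_toLp {d : ℕ} (x : Fin d → ℝ) : e2norm x = ‖(WithLp.toLp 2 x : EuclideanSpace ℝ (Fin d))‖ := by
  rw [EuclideanSpace.norm_eq]
  simp [e2norm]

lemma aux_nonneg {d : ℕ} (x : Fin d → ℝ) : 0 ≤ e2norm x := Real.sqrt_nonneg _

lemma aux_cs {d : ℕ} (x y : Fin d → ℝ) : ∑ i, x i * y i ≤ e2norm x * e2norm y :=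
  Real.sum_mul_le_sqrt_mul_sqrt _ _ _

lemma aux_tri {d : ℕ} (x y : Fin d → ℝ) : e2norm x ≤ e2norm y + e2norm (y - x) := by
  rw [aux_e2_toLp, aux_e2_toLp, aux_e2_toLp, WithLp.toLp_sub, norm_sub_rev]
  have := norm_add_le (WithLp.toLp 2 y : EuclideanSpace ℝ (Fin d)) (WithLp.toLp 2 x - WithLp.toLp 2 y)
  simpa using this

lemma aux_neg {d : ℕ} (x y : Fin d → ℝ) : e2norm (x - y) = e2norm (y - x) := by
  rw [aux_e2_toLp, aux_e2_toLp, WithLp.toLp_sub, norm_sub_rev, WithLp.toLp_sub]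

lemma aux_point {m n : ℕ} (σ Cw : ℝ) (w : Fin n → ℝ) (hw : e2norm w ≤ Cw)
    (g1 g2 : Fin m → ℝ) (h1 h2 : Fin n → ℝ) :
    Real.sqrt (e2norm w ^ 2 + σ ^ 2) * e2norm g1 + ∑ i, h1 i * w i
      ≤ Real.sqrt (e2norm w ^ 2 + σ ^ 2) * e2norm g2 + ∑ i, h2 i * w i +
        Real.sqrt (2 * Cw ^ 2 + σ ^ 2) *
            Real.sqrt (e2norm (g2 - g1) ^ 2 + e2norm (h2 - h1) ^ 2) := by
  have hw0 := aux_nonneg w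
  have ht := aux_tri g1 g2
  have hc := aux_cs (h1 - h2) w
  rw [aux_neg] at hc
  have hs : ∑ i, (h1 - h2) i * w i = ∑ i, h1 i * w i - ∑ i, h2 i * w i := by
    rw [← Finset.sum_sub_distrib]
    exact Finset.sum_congr rfl fun i _ => by simp [sub_mul]
  have hA0 := Real.sqrt_nonneg (e2norm w ^ 2 + σ ^ 2)
  have hA := Real.sq_sqrt (show 0 ≤ e2norm w ^ 2 + σ ^ 2 by positivity)
  set A := Real.sqrt (e2norm w ^ 2 + σ ^ 2)
  have key : A * e2norm (g2 - g1) + e2norm (h2 - h1) * e2norm w ≤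
      Real.sqrt (2 * Cw ^ 2 + σ ^ 2) *
            Real.sqrt (e2norm (g2 - g1) ^ 2 + e2norm (h2 - h1) ^ 2) := by
    rw [← Real.sqrt_mul (by positivity)]
    apply Real.le_sqrt_of_sq_le
    have h1' : (A * e2norm (g2 - g1) + e2norm (h2 - h1) * e2norm w) ^ 2 ≤
      (A ^ 2 + e2norm w ^ 2) * (e2norm (g2 - g1) ^ 2 + e2norm (h2 - h1) ^ 2) := by
      nlinarith [sq_nonneg (A * e2norm (h2 - h1) - e2norm w * e2norm (g2 - g1))]
    refine h1'.trans (mul_le_mul_of_nonneg_right ?_ (by positivity))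
    nlinarith
  have := mul_le_mul_of_nonneg_left ht hA0
  nlinarith

lemma aux_half {m n : ℕ} (σ Cw : ℝ) (hCw : 0 < Cw) (xt : Fin n → ℝ)
    (g1 g2 : Fin m → ℝ) (h1 h2 : Fin n → ℝ) :
    xiFun m n σ Cw xt g1 h1 ≤ xiFun m n σ Cw xt g2 h2 +
        Real.sqrt (2 * Cw ^ 2 + σ ^ 2) *
            Real.sqrt (e2norm (g2 - g1) ^ 2 + e2norm (h2 - h1) ^ 2) := by
  rw [← sub_le_iff_le_add]
  unfold xiFun
  apply le_csInf
  · refine Set.Nonempty.image _ ⟨0, ?_, ?_⟩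
    · simpa [e2norm] using hCw.le
    · simp
  · rintro _ ⟨w, hw, rfl⟩
    rw [sub_le_iff_le_add]
    refine le_trans (csInf_le ?_ ⟨w, hw, rfl⟩) (aux_point σ Cw w hw.1 g1 g2 h1 h2)
    refine ⟨-(e2norm h1 * Cw), ?_⟩
    rintro _ ⟨v, hv, rfl⟩
    have hc := aux_cs (-h1) v
    have hn : e2norm (-h1) = e2norm h1 := by simp [e2norm]
    have hs : ∑ i, (-h1) i * v i = -∑ i, h1 i * v i := by simp
    have h3 := mul_le_mul_of_nonneg_left hv.1 (aux_nonneg h1)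
    have h4 := mul_nonneg (Real.sqrt_nonneg (e2norm v ^ 2 + σ ^ 2)) (aux_nonneg g1)
    rw [hn, hs] at hc
    dsimp only
    linarith

theorem lasso_stmt5 (m n k : ℕ) (hn : 1 ≤ n) (hk1 : 1 ≤ k) (hkn : k ≤ n)
    (xt : Fin n → ℝ) (hxt : kSparseNonneg n k xt)
    (σ Cw : ℝ) (hσ : 0 < σ) (hCw : 0 < Cw) :
    ∀ (g1 g2 : Fin m → ℝ) (h1 h2 : Fin n → ℝ),
      |xiFun m n σ Cw xt g2 h2 - xiFun m n σ Cw xt g1 h1|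
        ≤ Real.sqrt (2 * Cw ^ 2 + σ ^ 2) *
            Real.sqrt (e2norm (g2 - g1) ^ 2 + e2norm (h2 - h1) ^ 2) := by
  intro g1 g2 h1 h2
  have a := aux_half σ Cw hCw xt g1 g2 h1 h2
  have b := aux_half σ Cw hCw xt g2 g1 h2 h1
  rw [aux_neg g1 g2, aux_neg h1 h2] at b
  rw [abs_le]
  constructor <;> linarith
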